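/- arXiv:2603.16369 — 2 statements merged into one kernel-verified Lean document; each statement's English description precedes it below -/
import Mathlib

section
/- If f(z) = Σ_{n≥0} a_n z^n is holomorphic on the unit disk D with |f(z)| ≤ 1 on D, then for all n ≥ 1 and |z| < 1, |f^{(n)}(z)|/n! ≤ (1 - |f(z)|^2) / ((1-|z|)^{n-1}(1-|z|^2)). -/
open Metric

lemma mob_den {a w : ℂ} (ha : ‖a‖ < 1) (hw : ‖w‖ < 1) : 1 + (starRingEnd ℂ) a * w ≠ 0 := by
  intro h
  have h1 : (starRingEnd ℂ) a * w = -1 := by linear_combination h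
  have h2 := congrArg norm h1
  rw [norm_mul, RCLike.norm_conj, norm_neg, norm_one] at h2
  nlinarith [norm_nonneg a, norm_nonneg w]

lemma mob_lt {a w : ℂ} (ha : ‖a‖ < 1) (hw : ‖w‖ < 1) :
    ‖(w + a) / (1 + (starRingEnd ℂ) a * w)‖ < 1 := by
  have hd := mob_den ha hw
  rw [norm_div, div_lt_one (norm_pos_iff.mpr hd)]
  apply lt_of_pow_lt_pow_left₀ 2 (norm_nonneg _)
  have h1 : ‖a‖ ^ 2 < 1 := by nlinarith [norm_nonneg a]
  have h2 : ‖w‖ ^ 2 < 1 := by nlinarith [norm_nonneg w]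
  have h3 : ‖1 + (starRingEnd ℂ) a * w‖ ^ 2 - ‖w + a‖ ^ 2 = (1 - ‖a‖ ^ 2) * (1 - ‖w‖ ^ 2) := by
    simp only [Complex.sq_norm, Complex.normSq_apply]
    simp
    ring
  nlinarith [mul_pos (sub_pos.mpr h1) (sub_pos.mpr h2)]

lemma sum_aux (n : ℕ) (X : ℕ → ℂ) :
    ∑ j ∈ Finset.range (n + 1), ((n.choose j : ℂ) * (n + j + 2) * X j
      + (n.choose j : ℂ) * (j + 2) * X (j + 1))
    = (n + 2) * ∑ j ∈ Finset.range (n + 2), ((n + 1).choose j : ℂ) * X j := by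
  rw [Finset.sum_add_distrib]
  have h1 : ∑ j ∈ Finset.range (n + 1), (n.choose j : ℂ) * (n + j + 2) * X j
      = ∑ j ∈ Finset.range (n + 2), (n.choose j : ℂ) * (n + j + 2) * X j := by
    rw [Finset.sum_range_succ _ (n + 1)]; simp
  rw [h1, Finset.sum_range_succ', Finset.sum_range_succ' _ (n + 1), mul_add (_ + _) (Finset.sum _ _),
    Finset.mul_sum, add_right_comm, ← Finset.sum_add_distrib]
  congr 1
  · apply Finset.sum_congr rfl
    intro j hj
    have hj' : j ≤ n := by simpa [Nat.lt_succ_iff] using hj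
    have h := Nat.choose_succ_right_eq n j
    have h' : (n.choose (j + 1) : ℂ) * (j + 1) = n.choose j * (n - j) := by
      rw [← Nat.cast_sub hj']; exact_mod_cast h
    rw [Nat.choose_succ_succ]
    push_cast
    linear_combination X (j + 1) * h'
  · simp

lemma deriv_formula (f g : ℂ → ℂ) (hg : DifferentiableOn ℂ g (ball (0 : ℂ) 1))
    (a b : ℂ) (hq : ∀ ζ ∈ ball (0 : ℂ) 1, 1 - b * ζ ≠ 0)
    (hψ : ∀ ζ ∈ ball (0 : ℂ) 1, (ζ - a) / (1 - b * ζ) ∈ ball (0 : ℂ) 1)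
    (hfg : ∀ ζ ∈ ball (0 : ℂ) 1, f ζ = g ((ζ - a) / (1 - b * ζ))) (n : ℕ) :
    ∀ ζ ∈ ball (0 : ℂ) 1, iteratedDeriv (n + 1) f ζ = (n + 1).factorial *
      ∑ j ∈ Finset.range (n + 1), (n.choose j : ℂ) * (b ^ (n - j) * (1 - a * b) ^ (j + 1) *
        ((1 - b * ζ)⁻¹) ^ (n + j + 2) *
        (iteratedDeriv (j + 1) g ((ζ - a) / (1 - b * ζ)) / (j + 1).factorial)) := by
  have hqd : ∀ ζ ∈ ball (0 : ℂ) 1, HasDerivAt (fun ζ => (1 - b * ζ)⁻¹)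
      (b * ((1 - b * ζ)⁻¹) ^ 2) ζ := by
    intro ζ hζ
    have h1 : HasDerivAt (fun ζ => 1 - b * ζ) (-b) ζ := by
      simpa using ((hasDerivAt_id ζ).const_mul b).const_sub 1
    refine (h1.fun_inv (hq ζ hζ)).congr_deriv ?_
    have := hq ζ hζ
    field_simp
  have hψd : ∀ ζ ∈ ball (0 : ℂ) 1, HasDerivAt (fun ζ => (ζ - a) / (1 - b * ζ))
      ((1 - a * b) * ((1 - b * ζ)⁻¹) ^ 2) ζ := by
    intro ζ hζ
    have := ((hasDerivAt_id ζ).sub_const a).mul (hqd ζ hζ)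
    simp only [div_eq_mul_inv]
    refine this.congr_deriv ?_
    have hI : (1 - b * ζ) * (1 - b * ζ)⁻¹ = 1 := mul_inv_cancel₀ (hq ζ hζ)
    simp only [id]
    linear_combination (-(1 - b * ζ)⁻¹) * hI
  have hgd : ∀ k, ∀ ζ ∈ ball (0 : ℂ) 1,
      HasDerivAt (fun ζ => iteratedDeriv k g ((ζ - a) / (1 - b * ζ)))
      (iteratedDeriv (k + 1) g ((ζ - a) / (1 - b * ζ)) *
        ((1 - a * b) * ((1 - b * ζ)⁻¹) ^ 2)) ζ := by
    intro k ζ hζ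
    have hA : AnalyticAt ℂ g ((ζ - a) / (1 - b * ζ)) :=
      hg.analyticAt (isOpen_ball.mem_nhds (hψ ζ hζ))
    have hD : DifferentiableAt ℂ (iteratedDeriv k g) ((ζ - a) / (1 - b * ζ)) := by
      rw [iteratedDeriv_eq_iterate]
      exact (hA.iterated_deriv k).differentiableAt
    have := hD.hasDerivAt
    rw [← iteratedDeriv_succ] at this
    exact HasDerivAt.comp ζ this (hψd ζ hζ)
  induction n with
  | zero =>
    intro ζ hζ
    have hev : f =ᶠ[nhds ζ] fun ζ => g ((ζ - a) / (1 - b * ζ)) :=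
      Filter.eventually_of_mem (isOpen_ball.mem_nhds hζ) hfg
    have := hgd 0 ζ hζ
    simp only [iteratedDeriv_zero] at this
    simp [hev.deriv_eq, this.deriv, iteratedDeriv_one]
    ring
  | succ n ih =>
    intro ζ hζ
    rw [iteratedDeriv_succ]
    have hev := Filter.eventually_of_mem (isOpen_ball.mem_nhds hζ) ih
    rw [Filter.EventuallyEq.deriv_eq hev]
    have key : ∀ j ∈ Finset.range (n + 1), HasDerivAt (fun ζ => (n.choose j : ℂ) *
        (b ^ (n - j) * (1 - a * b) ^ (j + 1) *
        ((1 - b * ζ)⁻¹) ^ (n + j + 2) *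
        (iteratedDeriv (j + 1) g ((ζ - a) / (1 - b * ζ)) / (j + 1).factorial)))
        ((n.choose j : ℂ) * (n + j + 2) * (b ^ (n + 1 - j) * (1 - a * b) ^ (j + 1) *
        ((1 - b * ζ)⁻¹) ^ (n + 1 + j + 2) *
        (iteratedDeriv (j + 1) g ((ζ - a) / (1 - b * ζ)) / (j + 1).factorial)) +
        (n.choose j : ℂ) * (j + 2) * (b ^ (n + 1 - (j + 1)) * (1 - a * b) ^ (j + 1 + 1) *
        ((1 - b * ζ)⁻¹) ^ (n + 1 + (j + 1) + 2) *
        (iteratedDeriv (j + 1 + 1) g ((ζ - a) / (1 - b * ζ)) / (j + 1 + 1).factorial))) ζ := by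
      intro j hj
      have hj' : j ≤ n := by simpa [Nat.lt_succ_iff] using hj
      have := ((((hqd ζ hζ).pow (n + j + 2)).const_mul
        (b ^ (n - j) * (1 - a * b) ^ (j + 1))).mul
          ((hgd (j + 1) ζ hζ).div_const ((j + 1).factorial : ℂ))).const_mul (n.choose j : ℂ)
      refine this.congr_deriv ?_
      have e1 : n + 1 - j = (n - j) + 1 := by omega
      have e2 : n + 1 - (j + 1) = n - j := by omega
      have e3 : n + j + 2 - 1 = n + j + 1 := by omega
      rw [e1, e2, e3, Nat.factorial_succ (j + 1)]
      have hne : ((j + 1).factorial : ℂ) ≠ 0 := by exact_mod_cast (j + 1).factorial_ne_zero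
      have hne2 : (j : ℂ) + 1 + 1 ≠ 0 := by exact_mod_cast (j + 1).succ_ne_zero
      simp only [Pi.pow_apply]
      generalize (1 - b * ζ)⁻¹ = Q
      push_cast
      field_simp
      ring
    have := ((HasDerivAt.fun_sum key).const_mul (((n + 1).factorial : ℂ))).deriv
    rw [this, sum_aux n (fun j => (b ^ (n + 1 - j) * (1 - a * b) ^ (j + 1) *
        ((1 - b * ζ)⁻¹) ^ (n + 1 + j + 2) *
        (iteratedDeriv (j + 1) g ((ζ - a) / (1 - b * ζ)) / (j + 1).factorial))),
      Nat.factorial_succ (n + 1)]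
    push_cast
    ring

open Real in
lemma avg_bound (g : ℂ → ℂ) (hg : DifferentiableOn ℂ g (ball (0 : ℂ) 1))
    (hb : ∀ z ∈ ball (0 : ℂ) 1, ‖g z‖ ≤ 1) (k : ℕ) (hk : 1 ≤ k) (l : ℂ) (r : ℝ) (hr : 0 < r)
    (hr1 : r < 1) :
    ‖iteratedDeriv k g 0 / k.factorial + 2 * l * g 0‖ * r ^ k ≤ 1 + ‖l‖ ^ 2 := by
  have hsub : closedBall (0 : ℂ) r ⊆ ball 0 1 := closedBall_subset_ball hr1
  have hss : sphere (0 : ℂ) |r| ⊆ ball 0 1 := by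
    rw [abs_of_pos hr]; exact sphere_subset_closedBall.trans hsub
  have hne : ∀ z ∈ sphere (0 : ℂ) |r|, z ≠ 0 := by
    rw [abs_of_pos hr]
    intro z hz h
    simp [h] at hz; exact hr.ne hz
  have hgc : ContinuousOn g (sphere (0 : ℂ) |r|) := hg.continuousOn.mono hss
  have hDC : ∀ h : ℂ → ℂ, DifferentiableOn ℂ h (ball 0 1) → circleAverage h 0 r = h 0 := by
    intro h hh
    apply DiffContOnCl.circleAverage
    rw [abs_of_pos hr]
    exact hh.diffContOnCl_ball hsub
  -- the coefficient
  have h1 : circleAverage (fun w => g w * (w ^ k)⁻¹) 0 r = iteratedDeriv k g 0 / k.factorial := by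
    rw [circleAverage_eq_circleIntegral hr.ne']
    have := (hg.diffContOnCl_ball hsub).circleIntegral_one_div_sub_center_pow_smul hr k
    have e : (∮ z in C(0, r), (z - 0)⁻¹ • (g z * (z ^ k)⁻¹))
        = ∮ z in C(0, r), (1 / (z - 0) ^ (k + 1)) • g z := by
      apply circleIntegral.integral_congr hr.le
      intro z hz
      have : z ≠ 0 := hne z (by rwa [abs_of_pos hr])
      simp
      field_simp
      ring
    rw [e, this]
    have : (k.factorial : ℂ) ≠ 0 := by exact_mod_cast k.factorial_ne_zero
    have := Complex.two_pi_I_ne_zero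
    simp only [smul_eq_mul]
    field_simp
  have h2 : circleAverage (fun w => 2 * l * g w + l ^ 2 * (g w * w ^ k)) 0 r = 2 * l * g 0 := by
    rw [hDC _ (by fun_prop)]
    have : k ≠ 0 := by omega
    simp [this]
  have hi1 : CircleIntegrable (fun w => g w * (w ^ k)⁻¹) 0 r := by
    apply ContinuousOn.circleIntegrable'
    exact hgc.mul ((continuousOn_id.pow k).inv₀ fun z hz => pow_ne_zero _ (hne z hz))
  have hi2 : CircleIntegrable (fun w => 2 * l * g w + l ^ 2 * (g w * w ^ k)) 0 r := by
    apply ContinuousOn.circleIntegrable'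
    fun_prop
  have h3 := circleAverage_fun_add hi1 hi2
  rw [h1, h2] at h3
  -- the mean square
  have h4 : circleAverage (fun w => ‖1 + l * w ^ k‖ ^ 2) 0 r = 1 + ‖l‖ ^ 2 * r ^ (2 * k) := by
    have e1 : circleAverage (fun w : ℂ => ‖1 + l * w ^ k‖ ^ 2) 0 r
        = circleAverage (fun w : ℂ => Complex.reCLM (((1 + ‖l‖ ^ 2 * r ^ (2 * k) : ℝ) : ℂ) + 2 * (l * w ^ k))) 0 r := by
      apply circleAverage_congr_sphere
      intro w hw
      have hw' : ‖w‖ = r := by simpa [abs_of_pos hr] using hw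
      have : ‖l * w ^ k‖ ^ 2 = ‖l‖ ^ 2 * r ^ (2 * k) := by
        rw [norm_mul, norm_pow, hw']; ring
      simp only [← this]
      generalize l * w ^ k = u
      rw [Complex.sq_norm, Complex.sq_norm, Complex.normSq_apply, Complex.normSq_apply]
      simp
      ring
    rw [e1]
    have e2 := ContinuousLinearMap.circleAverage_comp_comm (c := 0) (R := r) Complex.reCLM
      (f := fun w : ℂ => ((1 + ‖l‖ ^ 2 * r ^ (2 * k) : ℝ) : ℂ) + 2 * (l * w ^ k))
      (by apply ContinuousOn.circleIntegrable'; fun_prop)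
    have e3 := hDC (fun w : ℂ => ((1 + ‖l‖ ^ 2 * r ^ (2 * k) : ℝ) : ℂ) + 2 * (l * w ^ k)) (by fun_prop)
    rw [e3] at e2
    refine Eq.trans ?_ (e2.trans ?_)
    · rfl
    have : k ≠ 0 := by omega
    rw [zero_pow this, mul_zero, mul_zero, add_zero, Complex.reCLM_apply, Complex.ofReal_re]
  have h5 : ‖iteratedDeriv k g 0 / k.factorial + 2 * l * g 0‖
      ≤ (r ^ k)⁻¹ * circleAverage (fun w => ‖1 + l * w ^ k‖ ^ 2) 0 r := by
    rw [← h3, circleAverage_def, circleAverage_def, norm_smul, smul_eq_mul, mul_left_comm,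
      norm_of_nonneg (by positivity), ← intervalIntegral.integral_const_mul]
    gcongr
    apply intervalIntegral.norm_integral_le_of_norm_le (by positivity)
    · refine Filter.Eventually.of_forall fun t _ => ?_
      have hw : circleMap 0 r t ∈ sphere (0 : ℂ) |r| := circleMap_mem_sphere' 0 r t
      generalize circleMap 0 r t = w at hw
      have hw' : ‖w‖ = r := by simpa [abs_of_pos hr] using hw
      have hw0 := hne w hw
      have : g w * (w ^ k)⁻¹ + (2 * l * g w + l ^ 2 * (g w * w ^ k))
          = g w * ((w ^ k)⁻¹ * (1 + l * w ^ k) ^ 2) := by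
        field_simp
        ring
      rw [this, norm_mul, norm_mul, norm_inv, norm_pow, norm_pow, hw']
      exact mul_le_of_le_one_left (by positivity) (hb w (hss hw))
    · apply Continuous.intervalIntegrable
      fun_prop
  rw [h4] at h5
  have hrk : 0 < r ^ k := by positivity
  calc _ ≤ (r ^ k)⁻¹ * (1 + ‖l‖ ^ 2 * r ^ (2 * k)) * r ^ k := by gcongr
    _ = 1 + ‖l‖ ^ 2 * r ^ (2 * k) := by field_simp
    _ ≤ 1 + ‖l‖ ^ 2 * 1 := by gcongr; exact pow_le_one₀ hr.le hr1.le
    _ = _ := by ring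

lemma coef_bound (g : ℂ → ℂ) (hg : DifferentiableOn ℂ g (ball (0 : ℂ) 1))
    (hb : ∀ z ∈ ball (0 : ℂ) 1, ‖g z‖ ≤ 1) (k : ℕ) (hk : 1 ≤ k) :
    ‖iteratedDeriv k g 0 / k.factorial‖ ≤ 1 - ‖g 0‖ ^ 2 := by
  have key : ∀ l : ℂ, ‖iteratedDeriv k g 0 / k.factorial + 2 * l * g 0‖ ≤ 1 + ‖l‖ ^ 2 := by
    intro l
    have ht : Filter.Tendsto
        (fun r : ℝ => ‖iteratedDeriv k g 0 / k.factorial + 2 * l * g 0‖ * r ^ k)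
        (nhdsWithin 1 (Set.Iio 1))
        (nhds (‖iteratedDeriv k g 0 / k.factorial + 2 * l * g 0‖ * 1 ^ k)) :=
      ((by fun_prop : Continuous (fun r : ℝ =>
        ‖iteratedDeriv k g 0 / k.factorial + 2 * l * g 0‖ * r ^ k)).tendsto 1).mono_left
        nhdsWithin_le_nhds
    rw [one_pow, mul_one] at ht
    apply le_of_tendsto ht
    filter_upwards [Ioo_mem_nhdsLT (zero_lt_one (α := ℝ))] with r hr
    exact avg_bound g hg hb k hk l r hr.1 hr.2
  generalize iteratedDeriv k g 0 / k.factorial = c at key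
  obtain ⟨u, hu, hc⟩ : ∃ u : ℂ, ‖u‖ = 1 ∧ c = ‖c‖ * u := by
    by_cases h : c = 0
    · exact ⟨1, by simp, by simp [h]⟩
    · have : (‖c‖ : ℂ) ≠ 0 := by simpa using h
      exact ⟨c / ‖c‖, by simp [h], by field_simp⟩
  have h := key (u * (starRingEnd ℂ) (g 0))
  have e : c + 2 * (u * (starRingEnd ℂ) (g 0)) * g 0 = ((‖c‖ + 2 * ‖g 0‖ ^ 2 : ℝ) : ℂ) * u := by
    have := Complex.conj_mul' (g 0)
    push_cast
    linear_combination hc + 2 * u * this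
  rw [e, norm_mul, norm_mul, hu, RCLike.norm_conj, Complex.norm_real,
    Real.norm_of_nonneg (by positivity)] at h
  linarith

theorem stmt_1 (f : ℂ → ℂ)
    (hf : DifferentiableOn ℂ f (ball (0 : ℂ) 1))
    (hbd : ∀ z ∈ ball (0 : ℂ) 1, ‖f z‖ ≤ 1) :
    ∀ n : ℕ, 1 ≤ n → ∀ z ∈ ball (0 : ℂ) 1,
      ‖iteratedDerivWithin n f (ball (0 : ℂ) 1) z‖ / (Nat.factorial n)
        ≤ (1 - ‖f z‖ ^ 2) / ((1 - ‖z‖) ^ (n - 1) * (1 - ‖z‖ ^ 2)) := by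
  intro n hn z hz
  obtain ⟨n, rfl⟩ : ∃ m, n = m + 1 := ⟨n - 1, by omega⟩
  rw [iteratedDerivWithin_of_isOpen isOpen_ball hz, Nat.add_sub_cancel]
  have ha : ‖z‖ < 1 := by simpa using hz
  set b := (starRingEnd ℂ) z with hbdef
  have hbn : ‖b‖ = ‖z‖ := RCLike.norm_conj z
  set g : ℂ → ℂ := fun w => f ((w + z) / (1 + b * w)) with hgdef
  have hmaps : ∀ w ∈ ball (0 : ℂ) 1, (w + z) / (1 + b * w) ∈ ball (0 : ℂ) 1 := by
    intro w hw
    rw [mem_ball_zero_iff] at hw ⊢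
    exact mob_lt ha hw
  have hg : DifferentiableOn ℂ g (ball (0 : ℂ) 1) := by
    refine DifferentiableOn.comp (t := ball 0 1) hf ?_ hmaps
    refine DifferentiableOn.div (by fun_prop) (by fun_prop) ?_
    intro w hw
    exact mob_den ha (by simpa using hw)
  have hgb : ∀ w ∈ ball (0 : ℂ) 1, ‖g w‖ ≤ 1 := fun w hw => hbd _ (hmaps w hw)
  have hg0 : g 0 = f z := by simp [hgdef]
  have hq : ∀ ζ ∈ ball (0 : ℂ) 1, 1 - b * ζ ≠ 0 := by
    intro ζ hζ
    have := mob_den (a := -z) (w := ζ) (by simpa using ha) (by simpa using hζ)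
    simpa [sub_eq_add_neg] using this
  have hψ : ∀ ζ ∈ ball (0 : ℂ) 1, (ζ - z) / (1 - b * ζ) ∈ ball (0 : ℂ) 1 := by
    intro ζ hζ
    have := mob_lt (a := -z) (w := ζ) (by simpa using ha) (by simpa using hζ)
    rw [mem_ball_zero_iff]
    simpa only [map_neg, neg_mul, ← sub_eq_add_neg] using this
  have hsC : 1 - z * b = ((1 - ‖z‖ ^ 2 : ℝ) : ℂ) := by
    rw [hbdef, Complex.mul_conj']; push_cast; ring
  have hs : 0 < 1 - ‖z‖ ^ 2 := by nlinarith [norm_nonneg z]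
  have hfg : ∀ ζ ∈ ball (0 : ℂ) 1, f ζ = g ((ζ - z) / (1 - b * ζ)) := by
    intro ζ hζ
    have h1 := hq ζ hζ
    have h2 := mob_den ha (w := (ζ - z) / (1 - b * ζ)) (by simpa using hψ ζ hζ)
    rw [← hbdef] at h2
    simp only [hgdef]
    congr 1
    rw [eq_div_iff h2]
    have hI : (1 - b * ζ) * (1 - b * ζ)⁻¹ = 1 := mul_inv_cancel₀ h1
    simp only [div_eq_mul_inv]
    linear_combination (-(ζ - z)) * hI
  rw [deriv_formula f g hg z b hq hψ hfg n z hz]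
  have hfac : (0 : ℝ) < (n + 1).factorial := by exact_mod_cast (n + 1).factorial_pos
  rw [norm_mul, Complex.norm_natCast, mul_div_cancel_left₀ _ hfac.ne']
  have hM : 0 ≤ 1 - ‖f z‖ ^ 2 := by nlinarith [hbd z hz, norm_nonneg (f z)]
  calc _ ≤ ∑ j ∈ Finset.range (n + 1), (1 : ℝ) ^ j * ‖z‖ ^ (n - j) * (n.choose j) *
        (((1 - ‖z‖ ^ 2)⁻¹) ^ (n + 1) * (1 - ‖f z‖ ^ 2)) := by
        refine (norm_sum_le _ _).trans (Finset.sum_le_sum fun j hj => ?_)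
        have hc := coef_bound g hg hgb (j + 1) (by omega)
        rw [hg0] at hc
        rw [sub_self, zero_div, mul_comm b z, hsC]
        simp only [norm_mul, norm_pow, norm_inv, hbn, Complex.norm_natCast, Complex.norm_real,
          Real.norm_of_nonneg hs.le]
        have e : (1 - ‖z‖ ^ 2) ^ (j + 1) * ((1 - ‖z‖ ^ 2)⁻¹) ^ (n + j + 2)
            = ((1 - ‖z‖ ^ 2)⁻¹) ^ (n + 1) := by
          rw [show n + j + 2 = (j + 1) + (n + 1) by ring, pow_add _ (j + 1) (n + 1), ← mul_assoc, ← mul_pow,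
            mul_inv_cancel₀ hs.ne', one_pow, one_mul]
        rw [mul_assoc (‖z‖ ^ (n - j)), e]
        have : 0 ≤ ((1 - ‖z‖ ^ 2)⁻¹) ^ (n + 1) := by positivity
        calc _ ≤ (n.choose j : ℝ) * (‖z‖ ^ (n - j) * ((1 - ‖z‖ ^ 2)⁻¹) ^ (n + 1) *
              (1 - ‖f z‖ ^ 2)) := by gcongr
          _ = _ := by ring
    _ = (1 + ‖z‖) ^ n * (((1 - ‖z‖ ^ 2)⁻¹) ^ (n + 1) * (1 - ‖f z‖ ^ 2)) := by
        rw [← Finset.sum_mul, ← add_pow]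
    _ = _ := by
        have h1 : 0 < 1 - ‖z‖ := by linarith
        have h2 : 0 < 1 + ‖z‖ := by positivity
        have e : 1 - ‖z‖ ^ 2 = (1 - ‖z‖) * (1 + ‖z‖) := by ring
        rw [e, pow_succ, inv_pow, mul_pow]
        field_simp
end

section
/- Let m ∈ ℕ ∪ {0}, β > -m, B_X the unit ball of a complex Banach space X, and F : B_X → closure(D^n) holomorphic with F(z) = Σ_{s≥m} P_s(z), where P_s(z) = (1/s!)D^sF(0)(z^s). Assume ‖P_m(z)‖_∞ is constant on ∂B_X and |(P_m)_j(z_0)| = ‖P_m(z_0)‖_∞ for all j and all z_0 ∈ ∂B_X. Then Σ_{s≥m} ‖P_s(z)‖_∞/(β+s) ≤ r^m/(m+β) for ‖z‖ = r ≤ R(β), where R(β) is the unique root in (0,1) of 1/(β+m) = 2 Σ_{s≥m+1} r^{s-m}/(β+s). -/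
open Metric

lemma aux_int (n : ℤ) : ∫ t in (0:ℝ)..(2 * Real.pi), Complex.exp (Complex.I * n * t) =
    if n = 0 then (2 * Real.pi : ℂ) else 0 := by
  split_ifs with h
  · subst h; simp
  · have hc : Complex.I * (n : ℂ) ≠ 0 := mul_ne_zero Complex.I_ne_zero (by exact_mod_cast h)
    rw [integral_exp_mul_complex hc]
    have : Complex.exp (Complex.I * n * ((2 * Real.pi : ℝ) : ℂ)) = 1 := by
      rw [Complex.exp_eq_one_iff]
      exact ⟨n, by push_cast; ring⟩
    rw [this]; simp

lemma aux_norm (x t : ℝ) : ‖Complex.exp (Complex.I * x * t)‖ = 1 := by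
  have := Complex.norm_exp_ofReal_mul_I (x * t)
  rw [← this]; congr 2; push_cast; ring

lemma aux_sum (d : ℕ → ℂ) (φ : ℝ → ℂ) (hd : Summable (fun i => ‖d i‖))
    (hφ : ∀ t : ℝ, HasSum (fun i : ℕ => d i * Complex.exp (Complex.I * i * t)) (φ t)) (n : ℤ) :
    HasSum (fun i : ℕ => d i * (if (i : ℤ) + n = 0 then (2 * Real.pi : ℂ) else 0))
      (∫ t in (0:ℝ)..(2 * Real.pi), φ t * Complex.exp (Complex.I * n * t)) := by
  have h1 : ∀ (i : ℕ) (t : ℝ), d i * Complex.exp (Complex.I * ((i + n : ℤ) : ℂ) * t) =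
      d i * Complex.exp (Complex.I * i * t) * Complex.exp (Complex.I * n * t) := by
    intro i t
    rw [mul_assoc (d i), ← Complex.exp_add]; congr 2; push_cast; ring
  have key := intervalIntegral.hasSum_integral_of_dominated_convergence
    (μ := MeasureTheory.volume) (a := 0) (b := 2 * Real.pi)
    (F := fun (i : ℕ) (t : ℝ) => d i * Complex.exp (Complex.I * ((i + n : ℤ) : ℂ) * t))
    (f := fun t => φ t * Complex.exp (Complex.I * n * t))
    (fun i _ => ‖d i‖)
    (fun i => by
      apply Continuous.aestronglyMeasurable
      fun_prop)
    (fun i => by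
      refine Filter.Eventually.of_forall fun t _ => ?_
      have := aux_norm ((i + n : ℤ) : ℝ) t
      rw [norm_mul]
      rw [Complex.ofReal_intCast] at this
      rw [this, mul_one])
    (Filter.Eventually.of_forall fun t _ => hd)
    (by simp)
    (by
      refine Filter.Eventually.of_forall fun t _ => ?_
      simp only [h1]
      exact (hφ t).mul_right _)
  have h2 : ∀ i : ℕ, ∫ t in (0:ℝ)..(2 * Real.pi),
      d i * Complex.exp (Complex.I * ((i + n : ℤ) : ℂ) * t) =
      d i * (if (i : ℤ) + n = 0 then (2 * Real.pi : ℂ) else 0) := by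
    intro i
    rw [intervalIntegral.integral_const_mul, aux_int]
  simpa only [h2] using key

lemma aux_phase (w v : ℂ) : ∃ u : ℂ, ‖u‖ = 1 ∧ ‖w + u * v‖ = ‖w‖ + ‖v‖ := by
  by_cases hw : w = 0
  · exact ⟨1, by simp, by simp [hw]⟩
  by_cases hv : v = 0
  · exact ⟨1, by simp, by simp [hv]⟩
  have hw' : (‖w‖ : ℂ) ≠ 0 := by simpa using hw
  have hv' : (‖v‖ : ℂ) ≠ 0 := by simpa using hv
  refine ⟨w / ‖w‖ * (‖v‖ / v), ?_, ?_⟩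
  · simp [hw, hv]
  · have : w + w / ‖w‖ * (‖v‖ / v) * v = (w / ‖w‖) * ((‖w‖ + ‖v‖ : ℝ) : ℂ) := by
      push_cast; field_simp
    rw [this, norm_mul, Complex.norm_real, Real.norm_of_nonneg (by positivity)]
    simp [hw]

lemma aux_L1 (d : ℕ → ℂ) (φ : ℝ → ℂ) (hd : Summable (fun i => ‖d i‖))
    (hφ : ∀ t : ℝ, HasSum (fun i : ℕ => d i * Complex.exp (Complex.I * i * t)) (φ t))
    (hb : ∀ t, ‖φ t‖ ≤ 1) (k : ℕ) (hk : k ≠ 0) : ‖d 0‖ + ‖d k‖ / 2 ≤ 1 := by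
  have hpi := Real.pi_pos
  have hcont : Continuous φ := by
    have : φ = fun t : ℝ => ∑' i : ℕ, d i * Complex.exp (Complex.I * i * t) :=
      funext fun t => (hφ t).tsum_eq.symm
    rw [this]
    refine continuous_tsum (fun i => by fun_prop) hd fun i t => ?_
    have := aux_norm i t
    rw [Complex.ofReal_natCast] at this
    rw [norm_mul, this, mul_one]
  have e0 : ∫ t in (0:ℝ)..(2 * Real.pi), φ t = 2 * Real.pi * d 0 := by
    have h := aux_sum d φ hd hφ 0
    have h2 := hasSum_single (f := fun i : ℕ => d i * (if (i : ℤ) + 0 = 0 then (2 * Real.pi : ℂ) else 0)) 0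
      (fun i hi => by simp [hi])
    have := h.unique h2
    simp at this
    rw [this]; ring
  have e1 : ∫ t in (0:ℝ)..(2 * Real.pi), φ t * Complex.exp (Complex.I * ((-k : ℤ) : ℂ) * t)
      = 2 * Real.pi * d k := by
    have h := aux_sum d φ hd hφ (-k)
    have h2 := hasSum_single (f := fun i : ℕ => d i * (if (i : ℤ) + (-k) = 0 then (2 * Real.pi : ℂ) else 0)) k
      (fun i hi => by
        have : ¬ ((i : ℤ) + (-k) = 0) := by omega
        simp only [this, if_false, mul_zero])
    rw [h.unique h2]
    simp; ring
  have e2 : ∫ t in (0:ℝ)..(2 * Real.pi), φ t * Complex.exp (Complex.I * ((k : ℤ) : ℂ) * t) = 0 := by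
    have h := aux_sum d φ hd hφ k
    have : (fun i : ℕ => d i * (if (i : ℤ) + k = 0 then (2 * Real.pi : ℂ) else 0)) = fun _ => 0 := by
      funext i
      have : ¬ ((i : ℤ) + k = 0) := by omega
      simp only [this, if_false, mul_zero]
    rw [this] at h
    exact h.unique hasSum_zero
  obtain ⟨u, hu, hu2⟩ := aux_phase (d 0) (d k / 2)
  -- kernel
  let q : ℝ → ℂ := fun t => u * Complex.exp (Complex.I * ((-k : ℤ) : ℂ) * t)
  let κ : ℝ → ℝ := fun t => 1 + (q t).re
  have hq : Continuous q := by fun_prop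
  have hκc : Continuous κ := continuous_const.add (Complex.continuous_re.comp hq)
  have hqn : ∀ t, ‖q t‖ = 1 := by
    intro t
    have := aux_norm ((-k : ℤ) : ℝ) t
    rw [Complex.ofReal_intCast] at this
    simp only [q]; rw [norm_mul, this, hu, mul_one]
  have hκ0 : ∀ t, 0 ≤ κ t := by
    intro t
    have := Complex.abs_re_le_norm (q t)
    rw [hqn] at this
    have := (abs_le.mp this).1
    simp only [κ]; linarith
  have hκ : ∀ t, (κ t : ℂ) = 1 + (u / 2) * Complex.exp (Complex.I * ((-k : ℤ) : ℂ) * t)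
      + (starRingEnd ℂ u / 2) * Complex.exp (Complex.I * ((k : ℤ) : ℂ) * t) := by
    intro t
    have h3 : starRingEnd ℂ (q t) = starRingEnd ℂ u * Complex.exp (Complex.I * ((k : ℤ) : ℂ) * t) := by
      simp only [q, map_mul, ← Complex.exp_conj]
      congr 2
      simp
    simp only [κ]
    push_cast
    rw [Complex.re_eq_add_conj, h3]
    simp only [q]; push_cast; ring
  have hI : ∫ t in (0:ℝ)..(2 * Real.pi), φ t * κ t = 2 * Real.pi * (d 0 + u * (d k / 2)) := by
    have : ∀ t : ℝ, φ t * κ t = φ t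
       + (u / 2) * (φ t * Complex.exp (Complex.I * ((-k : ℤ) : ℂ) * t))
       + (starRingEnd ℂ u / 2) * (φ t * Complex.exp (Complex.I * ((k : ℤ) : ℂ) * t)) := by
      intro t; rw [hκ]; ring
    simp only [this]
    rw [intervalIntegral.integral_add, intervalIntegral.integral_add,
      intervalIntegral.integral_const_mul, intervalIntegral.integral_const_mul, e0, e1, e2]
    · ring
    all_goals
      apply Continuous.intervalIntegrable
      fun_prop
  have hK : ∫ t in (0:ℝ)..(2 * Real.pi), κ t = 2 * Real.pi := by
    have h : ((∫ t in (0:ℝ)..(2 * Real.pi), κ t : ℝ) : ℂ) = ((2 * Real.pi : ℝ) : ℂ) := by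
      rw [← intervalIntegral.integral_ofReal]
      simp only [hκ]
      rw [intervalIntegral.integral_add, intervalIntegral.integral_add,
        intervalIntegral.integral_const_mul, intervalIntegral.integral_const_mul, aux_int, aux_int]
      · have h1 : ¬ ((-k : ℤ) = 0) := by omega
        have h2 : ¬ ((k : ℤ) = 0) := by omega
        rw [if_neg h1, if_neg h2]; simp
      all_goals
        apply Continuous.intervalIntegrable
        fun_prop
    exact_mod_cast h
  have hle : ‖∫ t in (0:ℝ)..(2 * Real.pi), φ t * κ t‖ ≤ ∫ t in (0:ℝ)..(2 * Real.pi), κ t := by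
    apply intervalIntegral.norm_integral_le_of_norm_le (by positivity)
    · refine Filter.Eventually.of_forall fun t _ => ?_
      rw [norm_mul, Complex.norm_real, Real.norm_of_nonneg (hκ0 t)]
      nlinarith [hb t, hκ0 t]
    · exact hκc.intervalIntegrable _ _
  rw [hI, hK, norm_mul, hu2] at hle
  have : ‖(2 * Real.pi : ℂ)‖ = 2 * Real.pi := by
    simp [abs_of_pos hpi]
  rw [this] at hle
  have h5 : ‖d 0‖ + ‖d k / 2‖ ≤ 1 := by
    by_contra hcon
    push Not at hcon
    nlinarith
  simpa using h5

lemma aux_coeff (a : ℕ → ℂ) (G : ℂ → ℂ) (m : ℕ)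
    (h : ∀ ζ : ℂ, ‖ζ‖ < 1 → HasSum (fun i : ℕ => ζ ^ (m + i) * a i) (G ζ))
    (hb : ∀ ζ : ℂ, ‖ζ‖ < 1 → ‖G ζ‖ ≤ 1) (k : ℕ) (hk : k ≠ 0) : ‖a 0‖ + ‖a k‖ / 2 ≤ 1 := by
  have hρ : ∀ ρ ∈ Set.Ioo (0:ℝ) 1, ρ ^ m * ‖a 0‖ + ρ ^ (m + k) * ‖a k‖ / 2 ≤ 1 := by
    intro ρ hρ
    have hρn : ‖(ρ : ℂ)‖ = ρ := by rw [Complex.norm_real, Real.norm_of_nonneg hρ.1.le]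
    have hz : ∀ t : ℝ, ‖(ρ : ℂ) * Complex.exp (Complex.I * (1:ℝ) * t)‖ < 1 := by
      intro t
      rw [norm_mul, aux_norm, hρn, mul_one]; exact hρ.2
    have := aux_L1 (fun i => (ρ : ℂ) ^ (m + i) * a i)
      (fun t => Complex.exp (Complex.I * ((-m : ℝ) : ℂ) * t) *
        G ((ρ : ℂ) * Complex.exp (Complex.I * (1:ℝ) * t)))
      (h ρ (by rw [hρn]; exact hρ.2)).summable.norm
      (fun t => by
        have h1 := (h _ (hz t)).mul_left (Complex.exp (Complex.I * ((-m : ℝ) : ℂ) * t))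
        refine Eq.mp (congrArg (fun f => HasSum f _) (funext fun i => ?_)) h1
        symm
        rw [mul_pow, ← Complex.exp_nat_mul]
        have : Complex.exp (Complex.I * i * t) = Complex.exp (Complex.I * ((-m : ℝ) : ℂ) * t) *
          Complex.exp (((m + i : ℕ) : ℂ) * (Complex.I * (1:ℝ) * t)) := by
          rw [← Complex.exp_add]; congr 1; push_cast; ring
        rw [this]; ring)
      (fun t => by
        rw [norm_mul, aux_norm, one_mul]
        exact hb _ (hz t)) k hk
    simpa [norm_mul, norm_pow, hρn, abs_of_pos hρ.1] using this
  have ht : Filter.Tendsto (fun ρ : ℝ => ρ ^ m * ‖a 0‖ + ρ ^ (m + k) * ‖a k‖ / 2)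
      (nhdsWithin 1 (Set.Iio 1)) (nhds (1 ^ m * ‖a 0‖ + 1 ^ (m + k) * ‖a k‖ / 2)) := by
    apply Filter.Tendsto.mono_left _ nhdsWithin_le_nhds
    apply Continuous.tendsto (f := fun ρ : ℝ => ρ ^ m * ‖a 0‖ + ρ ^ (m + k) * ‖a k‖ / 2)
    fun_prop
  have := le_of_tendsto ht (b := 1) (by
    filter_upwards [Ioo_mem_nhdsLT (show (0:ℝ) < 1 by norm_num)] with ρ h using hρ ρ h)
  simpa using this

theorem stmt_17 {X : Type*} [NormedAddCommGroup X] [NormedSpace ℂ X] [CompleteSpace X]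
    (n m : ℕ) (β : ℝ) (hβ : -(m : ℝ) < β)
    (F : X → (Fin n → ℂ)) (P : ℕ → X → (Fin n → ℂ))
    (hF : DifferentiableOn ℂ F (ball (0 : X) 1))
    (hexp : ∀ z ∈ ball (0 : X) 1, HasSum (fun i : ℕ => P (m + i) z) (F z))
    (hhom : ∀ (s : ℕ) (c : ℂ) (z : X), P s (c • z) = c ^ s • P s z)
    (hbd : ∀ z ∈ ball (0 : X) 1, ‖F z‖ ≤ 1)
    (hconst : ∃ c : ℝ, ∀ z₀ : X, ‖z₀‖ = 1 → ‖P m z₀‖ = c)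
    (hmax : ∀ (j : Fin n) (z₀ : X), ‖z₀‖ = 1 → ‖P m z₀ j‖ = ‖P m z₀‖)
    (R : ℝ) (hR : R ∈ Set.Ioo (0 : ℝ) 1)
    (hroot : 1 / (β + m) = 2 * ∑' i : ℕ, R ^ (i + 1) / (β + (m + 1 + i)))
    (huniq : ∀ r ∈ Set.Ioo (0 : ℝ) 1,
        1 / (β + m) = 2 * ∑' i : ℕ, r ^ (i + 1) / (β + (m + 1 + i)) → r = R) :
    ∀ (z : X) (r : ℝ), ‖z‖ = r → r ≤ R →
      ∑' i : ℕ, ‖P (m + i) z‖ / (β + (m + i)) ≤ r ^ m / (m + β) := by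
  intro z r hz hr
  have hβm : 0 < β + m := by linarith
  by_cases hz0 : z = 0
  · subst hz0
    have hr0 : r = 0 := by rw [← hz]; simp
    have hP : ∀ s, s ≠ 0 → P s 0 = 0 := by
      intro s hs
      have := hhom s 0 0
      simpa [hs] using this
    have hs : HasSum (fun i : ℕ => P (m + i) 0) (P (m + 0) 0) :=
      hasSum_single 0 (fun i hi => hP _ (by omega))
    have hF0 : F 0 = P m 0 := (hexp 0 (by simp)).unique hs
    have hb0 : ‖P m 0‖ ≤ 1 := by rw [← hF0]; exact hbd 0 (by simp)
    rw [tsum_eq_single 0 (fun i hi => by rw [hP _ (by omega)]; simp)]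
    have : ‖P m 0‖ ≤ r ^ m := by
      by_cases hm : m = 0
      · subst hm; simpa using hb0
      · rw [hP m hm, hr0]; simp [hm]
    simp only [add_zero, Nat.cast_zero]
    rw [add_comm (m : ℝ) β]
    gcongr
  have hrpos : 0 < r := by rw [← hz]; exact norm_pos_iff.mpr hz0
  have hr1 : r < 1 := lt_of_le_of_lt hr hR.2
  obtain ⟨z₀, hz₀, hzz⟩ : ∃ z₀ : X, ‖z₀‖ = 1 ∧ z = (r : ℂ) • z₀ := by
    refine ⟨((r : ℂ)⁻¹) • z, ?_, ?_⟩
    · rw [norm_smul, hz, norm_inv, Complex.norm_real, Real.norm_of_nonneg hrpos.le]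
      field_simp
    · rw [smul_smul, mul_inv_cancel₀ (by exact_mod_cast hrpos.ne'), one_smul]
  have hco : ∀ (j : Fin n) (k : ℕ), k ≠ 0 → ‖P m z₀ j‖ + ‖P (m + k) z₀ j‖ / 2 ≤ 1 := by
    intro j k hk
    have hball : ∀ ζ : ℂ, ‖ζ‖ < 1 → ζ • z₀ ∈ ball (0 : X) 1 := by
      intro ζ hζ
      simpa [norm_smul, hz₀] using hζ
    refine aux_coeff (fun i => P (m + i) z₀ j) (fun ζ => F (ζ • z₀) j) m ?_ ?_ k hk
    · intro ζ hζ
      have h1 := Pi.hasSum.mp (hexp _ (hball ζ hζ)) j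
      simpa [hhom] using h1
    · intro ζ hζ
      exact (norm_le_pi_norm _ j).trans (hbd _ (hball ζ hζ))
  have hc1 : ‖P m z₀‖ ≤ 1 := by
    rw [pi_norm_le_iff_of_nonneg zero_le_one]
    intro j
    have := hco j 1 one_ne_zero
    linarith [norm_nonneg (P (m + 1) z₀ j)]
  have hck : ∀ k, k ≠ 0 → ‖P (m + k) z₀‖ ≤ 2 * (1 - ‖P m z₀‖) := by
    intro k hk
    rw [pi_norm_le_iff_of_nonneg (by linarith)]
    intro j
    have := hco j k hk
    rw [hmax j z₀ hz₀] at this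
    linarith
  set c := ‖P m z₀‖ with hc
  have hPz : ∀ s, ‖P s z‖ = r ^ s * ‖P s z₀‖ := by
    intro s
    rw [hzz, hhom, norm_smul, norm_pow, Complex.norm_real, Real.norm_of_nonneg hrpos.le]
  have hden : ∀ i : ℕ, 0 < β + (m + 1 + i) := by
    intro i
    have : (0:ℝ) ≤ i := Nat.cast_nonneg i
    linarith
  have hsumm : ∀ x : ℝ, 0 ≤ x → x < 1 → Summable (fun i : ℕ => x ^ (i + 1) / (β + (m + 1 + i))) := by
    intro x hx0 hx1
    refine Summable.of_nonneg_of_le (fun i => div_nonneg (by positivity) (hden i).le) (fun i => ?_)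
      ((summable_geometric_of_lt_one hx0 hx1).mul_right (x / (β + m)))
    rw [pow_succ, mul_div_assoc]
    have : (0:ℝ) ≤ i := Nat.cast_nonneg i
    gcongr
    linarith
  have hS : 2 * ∑' i : ℕ, r ^ (i + 1) / (β + (m + 1 + i)) ≤ 1 / (β + m) := by
    rw [hroot]
    refine mul_le_mul_of_nonneg_left ?_ zero_le_two
    refine (hsumm r hrpos.le hr1).tsum_le_tsum (fun i => ?_) (hsumm R hR.1.le hR.2)
    have := hden i
    gcongr
  set S := ∑' i : ℕ, r ^ (i + 1) / (β + (m + 1 + i)) with hSdef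
  have hsumm2 := (hsumm r hrpos.le hr1).mul_left (r ^ m * (2 * (1 - c)))
  have hterm : ∀ i : ℕ, ‖P (m + (i + 1)) z‖ / (β + (m + ((i + 1 : ℕ) : ℝ))) ≤
      r ^ m * (2 * (1 - c)) * (r ^ (i + 1) / (β + (m + 1 + i))) := by
    intro i
    have h1 := hck (i + 1) (by omega)
    have h2 := hden i
    have h3 : β + (m + ((i + 1 : ℕ) : ℝ)) = β + (m + 1 + i) := by push_cast; ring
    rw [h3, hPz, ← mul_div_assoc]
    refine div_le_div_of_nonneg_right ?_ h2.le
    rw [pow_add r m (i + 1)]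
    have : 0 ≤ r ^ m * r ^ (i + 1) := by positivity
    nlinarith
  have hnn : ∀ i : ℕ, 0 ≤ ‖P (m + (i + 1)) z‖ / (β + (m + ((i + 1 : ℕ) : ℝ))) := by
    intro i
    have h3 : β + (m + ((i + 1 : ℕ) : ℝ)) = β + (m + 1 + i) := by push_cast; ring
    rw [h3]
    exact div_nonneg (norm_nonneg _) (hden i).le
  have hs1 : Summable (fun i : ℕ => ‖P (m + (i + 1)) z‖ / (β + (m + ((i + 1 : ℕ) : ℝ)))) :=
    Summable.of_nonneg_of_le hnn hterm hsumm2
  have hs0 : Summable (fun i : ℕ => ‖P (m + i) z‖ / (β + (m + (i : ℝ)))) :=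
    (summable_nat_add_iff 1).mp hs1
  rw [hs0.tsum_eq_zero_add]
  have hle := hs1.tsum_le_tsum hterm hsumm2
  rw [tsum_mul_left] at hle
  have hrm : 0 < r ^ m := by positivity
  calc _ ≤ r ^ m * c / (β + m) + r ^ m * (2 * (1 - c)) * S := by
        refine add_le_add (le_of_eq ?_) hle
        simp [hPz, hc]
    _ = r ^ m * c / (β + m) + r ^ m * (1 - c) * (2 * S) := by ring
    _ ≤ r ^ m * c / (β + m) + r ^ m * (1 - c) * (1 / (β + m)) := by
        have : 0 ≤ r ^ m * (1 - c) := mul_nonneg hrm.le (by linarith)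
        gcongr
    _ = r ^ m / (m + β) := by rw [add_comm (m : ℝ) β]; ring
end
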